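/- For 1 ≤ l ≤ n let f_l(x) = x_{l−1} / √(s_{l−1}(x) s_l(x)) on U. Then for all 1 ≤ k, l ≤ n and every x ∈ U ∩ S^n, the directional derivative D_{e_k(x)} f_l(x) equals 0 if k > l, equals −1/s_k(x) if k = l, and equals −x_{k−1} x_{l−1} / √(s_{k−1}(x) s_k(x) s_{l−1}(x) s_l(x)) if k < l. -/

import Mathlib

open scoped InnerProductSpace BigOperators

noncomputable section

/-- `s_j(x) = ∑_{r=j}^n x_r²`. -/
def sfun (n j : ℕ) (x : EuclideanSpace ℝ (Fin (n + 1))) : ℝ :=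
  ∑ r : Fin (n + 1), if j ≤ (r : ℕ) then x r ^ 2 else 0

/-- The `j`-th coordinate of `x` (read as a natural-number index, `0` out of range). -/
def coordfun (n : ℕ) (x : EuclideanSpace ℝ (Fin (n + 1))) (j : ℕ) : ℝ :=
  if h : j < n + 1 then x ⟨j, h⟩ else 0

/-- The vector field `e_j(x) = √(s_j/s_{j-1}) ( −∂_{j−1} + (x_{j−1}/s_j) Σ_{r=j}^n x_r ∂_r )`. -/
def efun (n j : ℕ) (x : EuclideanSpace ℝ (Fin (n + 1))) : EuclideanSpace ℝ (Fin (n + 1)) :=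
  WithLp.toLp 2 fun r => Real.sqrt (sfun n j x / sfun n (j - 1) x) *
    (-(if (r : ℕ) = j - 1 then 1 else 0)
      + coordfun n x (j - 1) / sfun n j x * (if j ≤ (r : ℕ) then x r else 0))

/-- `U = {x ∈ ℝ^{n+1} : x_n > 0}`. -/
def Usph (n : ℕ) : Set (EuclideanSpace ℝ (Fin (n + 1))) := {x | 0 < coordfun n x n}

/-- The unit sphere `S^n ⊂ ℝ^{n+1}`. -/
def sph (n : ℕ) : Set (EuclideanSpace ℝ (Fin (n + 1))) :=
  {x | ∑ r : Fin (n + 1), x r ^ 2 = 1}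

/-- `f_l(x) = x_{l−1} / √(s_{l−1}(x) s_l(x))`. -/
def ffun (n l : ℕ) (x : EuclideanSpace ℝ (Fin (n + 1))) : ℝ :=
  coordfun n x (l - 1) / Real.sqrt (sfun n (l - 1) x * sfun n l x)

/-!
For `k ≥ 1` write `E_k = ∑_{r ≥ k} x_r ∂_r` for the Euler field in the coordinates of index at least
`k`. Since `√(s_k / s_{k-1}) x_{k-1} / s_k = f_k`, one has
`e_k = -√(s_k / s_{k-1}) ∂_{k-1} + f_k E_k`. Hence `e_k` annihilates `s_j` for `j < k`, and acts as
`f_k E_k` on functions of the coordinates of index at least `k`.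

If `k > l`, then `e_k` annihilates `x_{l-1}`, `s_{l-1}` and `s_l`, hence `f_l`. If `k < l`, then
`f_l` is homogeneous of degree `-1` in the coordinates of index at least `k`, so Euler's relation
gives `D_{e_k} f_l = -f_k f_l`. If `k = l`, the logarithmic derivative gives
`D_{e_k} f_k = -1 / s_{k-1} - f_k²`, which is `-1 / s_k` because `s_{k-1} = x_{k-1}² + s_k`.
-/

lemma fderiv_div_sqrt_mul_apply {E : Type*} [NormedAddCommGroup E] [NormedSpace ℝ E]
    {g p q : E → ℝ} {x : E} (hg : DifferentiableAt ℝ g x) (hp : DifferentiableAt ℝ p x)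
    (hq : DifferentiableAt ℝ q x) (hpq : 0 < p x * q x) (v : E) :
    fderiv ℝ (fun y => g y / √(p y * q y)) x v =
      fderiv ℝ g x v / √(p x * q x) -
        g x / √(p x * q x) * ((fderiv ℝ p x v / p x + fderiv ℝ q x v / q x) / 2) := by
  have hsqrt_pos : 0 < √(p x * q x) := Real.sqrt_pos.2 hpq
  have hsq : √(p x * q x) ^ 2 = p x * q x := Real.sq_sqrt hpq.le
  have hp0 : p x ≠ 0 := left_ne_zero_of_mul hpq.ne'
  have hq0 : q x ≠ 0 := right_ne_zero_of_mul hpq.ne'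
  have hsqrt : HasFDerivAt (fun y => √(p y * q y)) _ x :=
    (hp.hasFDerivAt.mul hq.hasFDerivAt).sqrt hpq.ne'
  have hinv := (hasDerivAt_inv hsqrt_pos.ne').comp_hasFDerivAt x hsqrt
  have hdiv : fderiv ℝ (fun y => g y / √(p y * q y)) x v =
      g x * (-(√(p x * q x) ^ 2)⁻¹ *
        (1 / (2 * √(p x * q x)) * (p x * fderiv ℝ q x v + q x * fderiv ℝ p x v))) +
        (√(p x * q x))⁻¹ * fderiv ℝ g x v :=
    congrArg (· v) (hg.hasFDerivAt.mul hinv).fderiv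
  rw [hdiv, hsq]
  field_simp
  ring

section

variable {n : ℕ} (x : EuclideanSpace ℝ (Fin (n + 1)))

lemma coordfun_val (i : Fin (n + 1)) : coordfun n x i = x i := by
  simp [coordfun, i.isLt]

lemma sfun_nonneg (j : ℕ) : 0 ≤ sfun n j x :=
  Finset.sum_nonneg fun r _ => by split_ifs <;> positivity

lemma sfun_eq_sq_add_sfun_succ (i : Fin (n + 1)) :
    sfun n i x = x i ^ 2 + sfun n (i + 1) x := by
  have hi : x i ^ 2 = ∑ r : Fin (n + 1), if r = i then x r ^ 2 else 0 := by simp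
  rw [hi, sfun, sfun, ← Finset.sum_add_distrib]
  refine Finset.sum_congr rfl fun r _ => ?_
  simp only [Fin.ext_iff]
  split_ifs <;> first | omega | simp

lemma antitone_sfun : Antitone fun j => sfun n j x := fun j k hjk =>
  Finset.sum_le_sum fun r _ => by
    split_ifs
    · exact le_rfl
    · omega
    · positivity
    · exact le_rfl

variable {x}

lemma sfun_pos_of_le {j k : ℕ} (hjk : j ≤ k) (h : 0 < sfun n k x) : 0 < sfun n j x :=
  h.trans_le (antitone_sfun x hjk)

lemma sfun_pos_of_mem_Usph {j : ℕ} (hj : j ≤ n) (hx : x ∈ Usph n) : 0 < sfun n j x := by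
  have hlast : 0 < x (Fin.last n) := by simpa [Usph, coordfun, Fin.last] using hx
  refine Finset.sum_pos' (fun r _ => by split_ifs <;> positivity)
    ⟨Fin.last n, Finset.mem_univ _, ?_⟩
  rw [Fin.val_last, if_pos hj]
  positivity

lemma le_of_sfun_pos {j : ℕ} (h : 0 < sfun n j x) : j ≤ n := by
  by_contra! hj
  refine h.ne' (Finset.sum_eq_zero fun r _ => if_neg ?_)
  omega

lemma exists_eq_val_add_one_of_sfun_pos {k : ℕ} (hk : 1 ≤ k) (h : 0 < sfun n k x) :
    ∃ i : Fin (n + 1), k = i + 1 :=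
  have hkn : k ≤ n := le_of_sfun_pos h
  ⟨⟨k - 1, by omega⟩, by simp only; omega⟩

variable (x)

lemma ffun_val_add_one (i : Fin (n + 1)) :
    ffun n (i + 1) x = x i / √(sfun n i x * sfun n (i + 1) x) := by
  rw [ffun, Nat.add_sub_cancel, coordfun_val]

/-- The value at `x` of the Euler field `∑_{r=j}^n x_r ∂_r`, i.e. `x` with its coordinates of index
less than `j` replaced by `0`. It spans the part of `e_j(x)` in the coordinates of index at
least `j`. -/
def eulerTail (n j : ℕ) (x : EuclideanSpace ℝ (Fin (n + 1))) : EuclideanSpace ℝ (Fin (n + 1)) :=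
  WithLp.toLp 2 fun r => if j ≤ (r : ℕ) then x r else 0

lemma efun_val_add_one (i : Fin (n + 1)) :
    efun n (i + 1) x =
      -√(sfun n (i + 1) x / sfun n i x) • EuclideanSpace.single i 1 +
        ffun n (i + 1) x • eulerTail n (i + 1) x := by
  have hcoeff : √(sfun n (i + 1) x / sfun n i x) * (x i / sfun n (i + 1) x) =
      ffun n (i + 1) x := by
    rw [ffun_val_add_one, Real.sqrt_div (sfun_nonneg x _), Real.sqrt_mul (sfun_nonneg x _)]
    calc √(sfun n (i + 1) x) / √(sfun n i x) * (x i / sfun n (i + 1) x)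
        = x i / √(sfun n i x) * (√(sfun n (i + 1) x) / sfun n (i + 1) x) := by ring
      _ = x i / (√(sfun n i x) * √(sfun n (i + 1) x)) := by
        rw [Real.sqrt_div_self', div_mul_div_comm, mul_one]
  rw [← hcoeff]
  ext r
  simp only [efun, add_tsub_cancel_right, coordfun_val, eulerTail, PiLp.add_apply, PiLp.smul_apply,
    PiLp.single_apply, Fin.ext_iff, smul_eq_mul]
  split_ifs <;> ring

lemma efun_apply_of_lt {i m : Fin (n + 1)} (h : m < i) : efun n (i + 1) x m = 0 := by
  simp [efun_val_add_one, eulerTail, h.ne, h.not_gt]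

lemma efun_apply_self (i : Fin (n + 1)) :
    efun n (i + 1) x i = -√(sfun n (i + 1) x / sfun n i x) := by
  simp [efun_val_add_one, eulerTail]

lemma efun_apply_of_gt {i m : Fin (n + 1)} (h : i < m) :
    efun n (i + 1) x m = ffun n (i + 1) x * x m := by
  simp [efun_val_add_one, eulerTail, h.ne', h.not_ge]

lemma hasFDerivAt_sfun (j : ℕ) :
    HasFDerivAt (sfun n j) (∑ r : Fin (n + 1), if j ≤ (r : ℕ) then
      (2 * x r) • (EuclideanSpace.proj r : EuclideanSpace ℝ (Fin (n + 1)) →L[ℝ] ℝ) else 0) x := by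
  unfold sfun
  refine HasFDerivAt.fun_sum fun r _ => ?_
  split_ifs
  · simpa using
      (EuclideanSpace.proj r : EuclideanSpace ℝ (Fin (n + 1)) →L[ℝ] ℝ).hasFDerivAt.pow 2
  · exact hasFDerivAt_const _ _

lemma fderiv_sfun_apply (j : ℕ) (v : EuclideanSpace ℝ (Fin (n + 1))) :
    fderiv ℝ (sfun n j) x v = 2 * ∑ r : Fin (n + 1), if j ≤ (r : ℕ) then x r * v r else 0 := by
  rw [(hasFDerivAt_sfun x j).fderiv, sum_apply, Finset.mul_sum]
  refine Finset.sum_congr rfl fun r _ => ?_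
  split_ifs <;> simp [mul_assoc]

lemma fderiv_sfun_single (i : Fin (n + 1)) (j : ℕ) :
    fderiv ℝ (sfun n j) x (EuclideanSpace.single i 1) = if j ≤ (i : ℕ) then 2 * x i else 0 := by
  rw [fderiv_sfun_apply, Finset.sum_eq_single i (fun r _ hr => by simp [hr]) (by simp)]
  simp

lemma fderiv_sfun_eulerTail (i j : ℕ) :
    fderiv ℝ (sfun n j) x (eulerTail n i x) = 2 * sfun n (max i j) x := by
  rw [fderiv_sfun_apply, sfun]
  congr 1
  refine Finset.sum_congr rfl fun r _ => ?_
  simp only [eulerTail, max_le_iff]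
  split_ifs <;> first | omega | ring

lemma fderiv_sfun_efun_of_gt {i : Fin (n + 1)} {j : ℕ} (h : (i : ℕ) < j) :
    fderiv ℝ (sfun n j) x (efun n (i + 1) x) = 2 * ffun n (i + 1) x * sfun n j x := by
  rw [efun_val_add_one, map_add, map_smul, map_smul, fderiv_sfun_single, fderiv_sfun_eulerTail,
    if_neg h.not_ge, max_eq_right (Nat.succ_le_of_lt h)]
  simp only [smul_eq_mul]
  ring

variable {x}

lemma fderiv_sfun_efun_of_le {i : Fin (n + 1)} {j : ℕ} (h : j ≤ (i : ℕ))
    (hs : 0 < sfun n (i + 1) x) :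
    fderiv ℝ (sfun n j) x (efun n (i + 1) x) = 0 := by
  have hs' : 0 < sfun n i x := sfun_pos_of_le (Nat.le_succ _) hs
  have hcancel : √(sfun n (i + 1) x / sfun n i x) * x i =
      ffun n (i + 1) x * sfun n (i + 1) x := by
    rw [ffun_val_add_one, Real.sqrt_div hs.le, Real.sqrt_mul hs'.le]
    field_simp
    rw [Real.sq_sqrt hs.le, mul_comm]
  rw [efun_val_add_one, map_add, map_smul, map_smul, fderiv_sfun_single, fderiv_sfun_eulerTail,
    if_pos h, max_eq_left (Nat.le_succ_of_le h)]
  simp only [smul_eq_mul]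
  linear_combination (-2) * hcancel

lemma fderiv_ffun_apply {i : Fin (n + 1)} (hs : 0 < sfun n (i + 1) x)
    (v : EuclideanSpace ℝ (Fin (n + 1))) :
    fderiv ℝ (ffun n (i + 1)) x v =
      v i / √(sfun n i x * sfun n (i + 1) x) -
        ffun n (i + 1) x * ((fderiv ℝ (sfun n i) x v / sfun n i x +
          fderiv ℝ (sfun n (i + 1)) x v / sfun n (i + 1) x) / 2) := by
  have hffun : ffun n (i + 1) = fun y => y i / √(sfun n i y * sfun n (i + 1) y) :=
    funext fun y => ffun_val_add_one y i
  have hproj : fderiv ℝ (fun y : EuclideanSpace ℝ (Fin (n + 1)) => y i) x v = v i :=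
    congrArg (· v) (EuclideanSpace.proj i : EuclideanSpace ℝ (Fin (n + 1)) →L[ℝ] ℝ).fderiv
  rw [hffun, fderiv_div_sqrt_mul_apply (by fun_prop) (hasFDerivAt_sfun x i).differentiableAt
    (hasFDerivAt_sfun x (i + 1)).differentiableAt
    (mul_pos (sfun_pos_of_le (Nat.le_succ _) hs) hs), hproj]

lemma fderiv_ffun_efun_of_lt {i j : Fin (n + 1)} (h : j < i) (hs : 0 < sfun n (i + 1) x) :
    fderiv ℝ (ffun n (j + 1)) x (efun n (i + 1) x) = 0 := by
  have hsj : 0 < sfun n (j + 1) x := sfun_pos_of_le (Nat.succ_le_succ h.le) hs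
  rw [fderiv_ffun_apply hsj, efun_apply_of_lt x h, fderiv_sfun_efun_of_le h.le hs,
    fderiv_sfun_efun_of_le h hs]
  simp

lemma fderiv_ffun_efun_self {i : Fin (n + 1)} (hs : 0 < sfun n (i + 1) x) :
    fderiv ℝ (ffun n (i + 1)) x (efun n (i + 1) x) = -(1 / sfun n (i + 1) x) := by
  have hs' : 0 < sfun n i x := sfun_pos_of_le (Nat.le_succ _) hs
  have hsqrt : √(sfun n (i + 1) x / sfun n i x) / √(sfun n i x * sfun n (i + 1) x) =
      1 / sfun n i x := by
    rw [Real.sqrt_div hs.le, Real.sqrt_mul hs'.le]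
    field_simp
    rw [Real.sq_sqrt hs'.le]
  have hsq : ffun n (i + 1) x ^ 2 = x i ^ 2 / (sfun n i x * sfun n (i + 1) x) := by
    rw [ffun_val_add_one, div_pow, Real.sq_sqrt (mul_pos hs' hs).le]
  calc fderiv ℝ (ffun n (i + 1)) x (efun n (i + 1) x)
      = -(√(sfun n (i + 1) x / sfun n i x) / √(sfun n i x * sfun n (i + 1) x)) -
          ffun n (i + 1) x ^ 2 := by
        rw [fderiv_ffun_apply hs, efun_apply_self, fderiv_sfun_efun_of_le le_rfl hs,
          fderiv_sfun_efun_of_gt x (Nat.lt_succ_self i)]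
        field_simp
        ring
    _ = -((sfun n (i + 1) x + x i ^ 2) / (sfun n i x * sfun n (i + 1) x)) := by
        rw [hsqrt, hsq]
        field_simp
        ring
    _ = -(1 / sfun n (i + 1) x) := by
        rw [add_comm, ← sfun_eq_sq_add_sfun_succ]
        field_simp

lemma fderiv_ffun_efun_of_gt {i j : Fin (n + 1)} (h : i < j) (hs : 0 < sfun n (j + 1) x) :
    fderiv ℝ (ffun n (j + 1)) x (efun n (i + 1) x) = -(ffun n (i + 1) x * ffun n (j + 1) x) := by
  have hs' : 0 < sfun n j x := sfun_pos_of_le (Nat.le_succ _) hs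
  rw [fderiv_ffun_apply hs, efun_apply_of_gt x h, fderiv_sfun_efun_of_gt x h,
    fderiv_sfun_efun_of_gt x (Nat.lt_succ_of_lt h), mul_div_cancel_right₀ _ hs'.ne',
    mul_div_cancel_right₀ _ hs.ne', mul_div_assoc, ← ffun_val_add_one]
  ring

variable (x)

lemma ffun_mul_ffun (k l : ℕ) :
    ffun n k x * ffun n l x =
      coordfun n x (k - 1) * coordfun n x (l - 1) /
        √(sfun n (k - 1) x * sfun n k x * sfun n (l - 1) x * sfun n l x) := by
  rw [ffun, ffun, div_mul_div_comm, mul_assoc (sfun n (k - 1) x * sfun n k x),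
    Real.sqrt_mul (mul_nonneg (sfun_nonneg x _) (sfun_nonneg x _))]

end

theorem statement2_general {n k l : ℕ} (hk : 1 ≤ k) (hl : 1 ≤ l)
    {x : EuclideanSpace ℝ (Fin (n + 1))} (hxk : 0 < sfun n k x) (hxl : 0 < sfun n l x) :
    fderiv ℝ (ffun n l) x (efun n k x)
      = if l < k then 0
        else if k = l then -(1 / sfun n k x)
        else -(coordfun n x (k - 1) * coordfun n x (l - 1)
          / √(sfun n (k - 1) x * sfun n k x * sfun n (l - 1) x * sfun n l x)) := by
  rw [← ffun_mul_ffun]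
  obtain ⟨i, rfl⟩ := exists_eq_val_add_one_of_sfun_pos hk hxk
  obtain ⟨j, rfl⟩ := exists_eq_val_add_one_of_sfun_pos hl hxl
  rcases lt_trichotomy j i with h | rfl | h
  · rw [if_pos (Nat.succ_lt_succ h), fderiv_ffun_efun_of_lt h hxk]
  · rw [if_neg (lt_irrefl _), if_pos rfl, fderiv_ffun_efun_self hxk]
  · have hij : (i : ℕ) + 1 < j + 1 := Nat.succ_lt_succ h
    rw [if_neg hij.not_gt, if_neg hij.ne, fderiv_ffun_efun_of_gt h hxl]

/-- Lemma 7 (Lemma `\ref{LemmaDerGamma}`): for `1 ≤ k, l ≤ n` and `x ∈ U ∩ S^n`, the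
directional derivative `D_{e_k(x)} f_l(x)` equals `0` if `k > l`, equals `−1/s_k(x)` if `k = l`,
and equals `−x_{k−1}x_{l−1}/√(s_{k−1} s_k s_{l−1} s_l)` if `k < l`. -/
theorem statement2 (n k l : ℕ) (hk : 1 ≤ k) (hkn : k ≤ n) (hl : 1 ≤ l) (hln : l ≤ n)
    (x : EuclideanSpace ℝ (Fin (n + 1))) (hxU : x ∈ Usph n) (hxS : x ∈ sph n) :
    fderiv ℝ (ffun n l) x (efun n k x)
      = if l < k then 0
        else if k = l then -(1 / sfun n k x)
        else -(coordfun n x (k - 1) * coordfun n x (l - 1)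
          / Real.sqrt (sfun n (k - 1) x * sfun n k x * sfun n (l - 1) x * sfun n l x)) :=
  statement2_general hk hl (sfun_pos_of_mem_Usph hkn hxU) (sfun_pos_of_mem_Usph hln hxU)
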